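/- For every t > 0 and all x, y > 0, the diffusion kernel satisfies the linearized symmetry condition associated with the invariant infinitesimal generator v = t²∂_t + 2tx∂_x − (x − y + t/2)u∂_u, namely (x − y + t/2)·K(t,x,y) + t²·∂K/∂t (t,x,y) + 2tx·∂K/∂x (t,x,y) = 0. -/

import Mathlib

open Real

/-- The spatially varying diffusion kernel on `(0,∞)`:
`K(t,x,y) = (πty)^(−1/2) · exp(−(x+y)/t) · cosh(2√(xy)/t)`. -/
noncomputable def diffusionKernel (t x y : ℝ) : ℝ :=
  (Real.pi * t * y) ^ (-(1 : ℝ) / 2) * Real.exp (-(x + y) / t) *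
    Real.cosh (2 * Real.sqrt (x * y) / t)

/-!
Up to the factor `t`, the vector field `t²∂_t + 2tx∂_x` generates the scaling `(t, x) ↦ (rt, r²x)`.
The argument `2√(xy)/t` of `cosh` is invariant under this scaling, so the kernel is only multiplied
by an elementary factor, and differentiating at `r = 1` gives the symmetry condition, for `cosh` as
for any other differentiable profile.
-/

/-- The kernel obtained from `diffusionKernel` by replacing `cosh` with an arbitrary profile `F` of
the similarity variable `2√(xy)/t`. -/
noncomputable def similarityKernel (F : ℝ → ℝ) (t x y : ℝ) : ℝ :=
  (π * t * y) ^ (-(1 : ℝ) / 2) * exp (-(x + y) / t) * F (2 * √(x * y) / t)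

/-- The factor acquired by a similarity kernel at `(t, x, y)` under the scaling
`(t, x) ↦ (rt, r²x)`. -/
noncomputable def scalingMultiplier (t x y r : ℝ) : ℝ :=
  r ^ (-(1 : ℝ) / 2) * exp ((1 - r) * (x / t) + (1 - r⁻¹) * (y / t))

theorem hasDerivAt_comp_weighted_scaling_one {𝕜 E : Type*} [NontriviallyNormedField 𝕜]
    [NormedAddCommGroup E] [NormedSpace 𝕜 E] {f : 𝕜 × 𝕜 → E} {t x : 𝕜}
    (hf : DifferentiableAt 𝕜 f (t, x)) (m n : ℕ) :
    HasDerivAt (fun r => f (r ^ m * t, r ^ n * x))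
      ((m * t) • deriv (fun s => f (s, x)) t + (n * x) • deriv (fun z => f (t, z)) x) 1 := by
  have partial_fst : deriv (fun s => f (s, x)) t = fderiv 𝕜 f (t, x) (1, 0) :=
    (hf.hasFDerivAt.comp_hasDerivAt t
      ((hasDerivAt_id' t).prodMk (hasDerivAt_const t x))).deriv
  have partial_snd : deriv (fun z => f (t, z)) x = fderiv 𝕜 f (t, x) (0, 1) :=
    (hf.hasFDerivAt.comp_hasDerivAt x
      ((hasDerivAt_const x t).prodMk (hasDerivAt_id' x))).deriv
  have orbit : HasDerivAt (fun r : 𝕜 => (r ^ m * t, r ^ n * x)) (m * t, n * x) 1 := by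
    simpa using ((hasDerivAt_pow m (1 : 𝕜)).mul_const t).prodMk
      ((hasDerivAt_pow n (1 : 𝕜)).mul_const x)
  have chain_rule := hf.hasFDerivAt.comp_hasDerivAt_of_eq (1 : 𝕜) orbit (by simp)
  rw [partial_fst, partial_snd, ← map_smul, ← map_smul, ← map_add]
  simpa [Function.comp_def] using chain_rule

theorem similarityKernel_scaling (F : ℝ → ℝ) {r t y : ℝ} (x : ℝ) (hr : 0 < r) (hty : 0 ≤ t * y) :
    similarityKernel F (r * t) (r ^ 2 * x) y =
      scalingMultiplier t x y r * similarityKernel F t x y := by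
  have power_scaling : (π * (r * t) * y) ^ (-(1 : ℝ) / 2) =
      r ^ (-(1 : ℝ) / 2) * (π * t * y) ^ (-(1 : ℝ) / 2) := by
    rw [← mul_rpow hr.le (by rw [mul_assoc]; positivity)]
    ring_nf
  have exponent_scaling : -(r ^ 2 * x + y) / (r * t) =
      (1 - r) * (x / t) + (1 - r⁻¹) * (y / t) + -(x + y) / t := by
    field_simp
    ring
  have similarity_variable_invariant : 2 * √(r ^ 2 * x * y) / (r * t) = 2 * √(x * y) / t := by
    rw [mul_assoc, sqrt_mul (sq_nonneg r), sqrt_sq hr.le]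
    field_simp
  rw [similarityKernel, power_scaling, exponent_scaling, similarity_variable_invariant, exp_add,
    similarityKernel, scalingMultiplier]
  ring

theorem hasDerivAt_scalingMultiplier_one (t x y : ℝ) :
    HasDerivAt (scalingMultiplier t x y) ((y - x) / t - 1 / 2) 1 := by
  have power := hasDerivAt_rpow_const (x := 1) (p := -(1 : ℝ) / 2) (.inl one_ne_zero)
  have exponent : HasDerivAt (fun r : ℝ => (1 - r) * (x / t) + (1 - r⁻¹) * (y / t))
      (-(x / t) + y / t) 1 := by
    simpa using (((hasDerivAt_id' (1 : ℝ)).const_sub 1).mul_const (x / t)).fun_add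
      (((hasDerivAt_inv (one_ne_zero (α := ℝ))).const_sub 1).mul_const (y / t))
  refine (power.fun_mul exponent.exp).congr_deriv ?_
  simp only [one_rpow, sub_self, inv_one, zero_mul, add_zero, exp_zero]
  ring

theorem differentiableAt_similarityKernel {F : ℝ → ℝ} {t x y : ℝ} (ht : t ≠ 0) (hx : x ≠ 0)
    (hy : y ≠ 0) (hF : DifferentiableAt ℝ F (2 * √(x * y) / t)) :
    DifferentiableAt ℝ (fun p : ℝ × ℝ => similarityKernel F p.1 p.2 y) (t, x) := by
  have prefactor : DifferentiableAt ℝ (fun p : ℝ × ℝ => (π * p.1 * y) ^ (-(1 : ℝ) / 2)) (t, x) :=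
    DifferentiableAt.rpow_const (by fun_prop) (.inl (by positivity))
  have exponential : DifferentiableAt ℝ (fun p : ℝ × ℝ => exp (-(p.2 + y) / p.1)) (t, x) := by
    fun_prop (disch := assumption)
  have similarity_variable :
      DifferentiableAt ℝ (fun p : ℝ × ℝ => 2 * √(p.2 * y) / p.1) (t, x) := by
    fun_prop (disch := positivity)
  exact (prefactor.mul exponential).mul (hF.comp (t, x) similarity_variable)

theorem diffusionKernel_linearized_symmetry_condition_general {F : ℝ → ℝ} {t x y : ℝ}
    (ht : 0 < t) (hx : 0 < x) (hy : 0 < y) (hF : DifferentiableAt ℝ F (2 * √(x * y) / t)) :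
    (x - y + t / 2) * similarityKernel F t x y +
      t ^ 2 * deriv (fun s => similarityKernel F s x y) t +
      2 * t * x * deriv (fun z => similarityKernel F t z y) x = 0 := by
  have scaling_deriv := hasDerivAt_comp_weighted_scaling_one
    (differentiableAt_similarityKernel ht.ne' hx.ne' hy.ne' hF) 1 2
  have multiplier_deriv :=
    (hasDerivAt_scalingMultiplier_one t x y).mul_const (similarityKernel F t x y)
  have scaling_eq : (fun r => similarityKernel F (r ^ 1 * t) (r ^ 2 * x) y) =ᶠ[nhds 1]
      fun r => scalingMultiplier t x y r * similarityKernel F t x y := by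
    filter_upwards [lt_mem_nhds one_pos] with r hr
    rw [pow_one, similarityKernel_scaling F x hr (by positivity)]
  have euler := scaling_deriv.unique (multiplier_deriv.congr_of_eventuallyEq scaling_eq)
  simp only [smul_eq_mul, Nat.cast_one, Nat.cast_ofNat, one_mul] at euler
  have clear_denominator : t * ((y - x) / t - 1 / 2) = y - x - t / 2 := by
    field_simp
  linear_combination t * euler + similarityKernel F t x y * clear_denominator

/-- The diffusion kernel satisfies the linearized symmetry condition of the invariant
generator `v = t²∂_t + 2tx∂_x − (x − y + t/2)u∂_u`, namely
`(x − y + t/2)·K + t²·∂K/∂t + 2tx·∂K/∂x = 0`. -/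
theorem diffusionKernel_linearized_symmetry_condition (t x y : ℝ) (ht : 0 < t) (hx : 0 < x)
    (hy : 0 < y) :
    (x - y + t / 2) * diffusionKernel t x y +
      t ^ 2 * deriv (fun s => diffusionKernel s x y) t +
      2 * t * x * deriv (fun z => diffusionKernel t z y) x = 0 :=
  diffusionKernel_linearized_symmetry_condition_general ht hx hy
    differentiable_cosh.differentiableAt
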